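/- Fix integers k, m ≥ 1. Then C(x) < 0 for every real x < 0, and C(x) > 1 for every real x > 1; i.e. the intervals (−∞, 0) and (1, ∞) are forward invariant under C. -/

import Mathlib

/-!
The reflection `x ↦ 1 - x` conjugates the Chebyshev maps of `z^k(z-1)^m` and `z^m(z-1)^k`, so it
suffices to treat `x < 0`. With `n = k + m` we have `C(x) = x(1 - (1 - x)E(x) / (2(k - nx)³))`, and
the second factor is positive because the polynomial `2(k - nx)³ - (1 - x)E(x)`, written in powers
of `-x`, has nonnegative coefficients and a positive leading one.
-/

section Ring

variable {R : Type*} [CommRing R]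

/-- The quadratic factor `E` in the Chebyshev correction term for `z^k(z-1)^m`. The exponents are
arbitrary ring elements, so that casts of natural numbers are a special case. -/
def chebyshevQuadratic (k m x : R) : R :=
  (k + m) * (3 * k + 3 * m - 1) * x ^ 2 - 2 * k * (3 * k + 3 * m - 1) * x + (3 * k ^ 2 - k)

lemma chebyshevQuadratic_one_sub (k m x : R) :
    chebyshevQuadratic m k (1 - x) = chebyshevQuadratic k m x := by
  unfold chebyshevQuadratic
  ring

end Ring

section Field

variable {K : Type*} [Field K]

/-- Chebyshev's method for `z^k(z-1)^m`, with the exponents `k` and `m` in the ground field.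
Since `a / 0 = 0`, the critical point `k / (k + m)` of this function is a spurious fixed point. -/
def chebyshevMap (k m x : K) : K :=
  x - x * (x - 1) * chebyshevQuadratic k m x / (2 * ((k + m) * x - k) ^ 3)

lemma chebyshevMap_one_sub (k m x : K) :
    chebyshevMap m k (1 - x) = 1 - chebyshevMap k m x := by
  have hden : 2 * ((m + k) * (1 - x) - m) ^ 3 = -(2 * ((k + m) * x - k) ^ 3) := by ring
  rw [chebyshevMap, chebyshevMap, chebyshevQuadratic_one_sub, hden, div_neg]
  ring

lemma chebyshevMap_eq_mul (k m x : K) :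
    chebyshevMap k m x =
      x * (1 - (1 - x) * chebyshevQuadratic k m x / (2 * (k - (k + m) * x) ^ 3)) := by
  have hden : 2 * ((k + m) * x - k) ^ 3 = -(2 * (k - (k + m) * x) ^ 3) := by ring
  rw [chebyshevMap, hden, div_neg]
  ring

end Field

section OrderedField

variable {K : Type*} [Field K] [LinearOrder K] [IsStrictOrderedRing K] {k m x : K}

lemma one_sub_mul_chebyshevQuadratic_lt (hk : 1 ≤ k) (hkm : 1 < k + m) (hx : x < 0) :
    (1 - x) * chebyshevQuadratic k m x < 2 * (k - (k + m) * x) ^ 3 := by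
  set n := k + m with hn
  have expansion : 2 * (k - n * x) ^ 3 - (1 - x) * chebyshevQuadratic k m x =
      n * (2 * n - 1) * (n - 1) * (-x) ^ 3
        + ((n - 1) * (3 * n * (2 * k - 1) - 2 * k) + 2 * n * (k - 1)) * (-x) ^ 2
        + 3 * k * (k - 1) * (2 * n - 1) * (-x)
        + k * (2 * k - 1) * (k - 1) := by
    rw [chebyshevQuadratic, hn]
    ring
  have hx' : 0 < -x := neg_pos.mpr hx
  have hk₁ : 0 < 2 * k - 1 := by linarith
  have hn₀ : 0 < n - 1 := sub_pos.mpr hkm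
  have hn₁ : 0 < 2 * n - 1 := by linarith
  have hquad : 0 ≤ 3 * n * (2 * k - 1) - 2 * k := by
    linarith [mul_pos hn₀ hk₁]
  have : 0 ≤ k - 1 := sub_nonneg.mpr hk
  rw [← sub_pos, expansion]
  positivity

theorem chebyshevMap_neg (hk : 1 ≤ k) (hkm : 1 < k + m) (hx : x < 0) :
    chebyshevMap k m x < 0 := by
  have hden : 0 < k - (k + m) * x := by
    linarith [mul_neg_of_pos_of_neg (zero_lt_one.trans hkm) hx]
  rw [chebyshevMap_eq_mul]
  refine mul_neg_of_neg_of_pos hx (sub_pos.mpr ?_)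
  rw [div_lt_one (by positivity)]
  exact one_sub_mul_chebyshevQuadratic_lt hk hkm hx

theorem one_lt_chebyshevMap (hm : 1 ≤ m) (hkm : 1 < k + m) (hx : 1 < x) :
    1 < chebyshevMap k m x := by
  have hreflected : chebyshevMap m k (1 - x) < 0 :=
    chebyshevMap_neg hm (by rwa [add_comm]) (sub_neg.mpr hx)
  rwa [chebyshevMap_one_sub, sub_neg] at hreflected

theorem chebyshev_forward_invariance_general (k m : K) (hkm : 1 < k + m) (C : K → K)
    (hC : ∀ x : K, x ≠ k / (k + m) → C x = chebyshevMap k m x) :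
    (1 ≤ k → ∀ x : K, x < 0 → C x < 0) ∧ (1 ≤ m → ∀ x : K, 1 < x → 1 < C x) := by
  have hn : 0 < k + m := zero_lt_one.trans hkm
  refine ⟨fun hk x hx ↦ ?_, fun hm x hx ↦ ?_⟩
  · have hξ : 0 < k / (k + m) := div_pos (zero_lt_one.trans_le hk) hn
    rw [hC x (hx.trans hξ).ne]
    exact chebyshevMap_neg hk hkm hx
  · have hξ : k / (k + m) < 1 := (div_lt_one hn).mpr (by linarith)
    rw [hC x (hξ.trans hx).ne']
    exact one_lt_chebyshevMap hm hkm hx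

end OrderedField

/-- For `k, m ≥ 1`, the Chebyshev map `C` for `z^k(z-1)^m` satisfies `C(x) < 0` for every
real `x < 0` and `C(x) > 1` for every real `x > 1`; i.e. `(-∞, 0)` and `(1, ∞)` are
forward invariant under `C`. -/
theorem chebyshev_forward_invariance (k m : ℕ) (hk : 1 ≤ k) (hm : 1 ≤ m)
    (C : ℝ → ℝ)
    (hC : ∀ x : ℝ, x ≠ (k : ℝ) / ((k : ℝ) + m) →
      C x = x - x * (x - 1) *
        (((k : ℝ) + m) * (3 * k + 3 * m - 1) * x ^ 2 - 2 * k * (3 * k + 3 * m - 1) * x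
          + (3 * (k : ℝ) ^ 2 - k)) / (2 * (((k : ℝ) + m) * x - k) ^ 3)) :
    (∀ x : ℝ, x < 0 → C x < 0) ∧ (∀ x : ℝ, 1 < x → 1 < C x) := by
  have hkm : (1 : ℝ) < k + m := by exact_mod_cast (show 1 < k + m by lia)
  exact (chebyshev_forward_invariance_general (k : ℝ) m hkm C hC).imp
    (· (mod_cast hk)) (· (mod_cast hm))
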